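/- Let f be a multicritical circle map with irrational rotation number for which the real a-priori bounds hold with constant C = C(f), and let c, c′ be any two critical points of f. If Δ is an atom of the n-th dynamical partition P_n(c) and Δ′ is an atom of P_n(c′) such that Δ ∩ Δ′ ≠ ∅, then |Δ| and |Δ′| are comparable: K^{−1}|Δ′| ≤ |Δ| ≤ K|Δ′| for a constant K > 1 depending only on C(f). -/

import Mathlib

open Set Filter MeasureTheory

noncomputable section

/-- The Schwarzian derivative `Sf = (f''/f')' - (1/2) (f''/f')^2`. -/
def schwarzianDeriv (f : ℝ → ℝ) (x : ℝ) : ℝ :=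
  deriv (fun y => deriv (deriv f) y / deriv f y) x
    - (1 / 2) * (deriv (deriv f) x / deriv f x) ^ 2

/-- A multicritical circle map, described through its lift `F : ℝ → ℝ` to the real line.
It is an orientation-preserving `C^3` circle homeomorphism with finitely many critical
points `c 0, …, c (N-1)`, each of non-flat power-law type: near `c i` the derivative is
pinched between two multiples of `|x - c i| ^ (s i - 1)` with `s i > 1`, the Schwarzian
derivative is negative on a punctured neighborhood of each critical point, and
`log (F')` has bounded variation (bounded by `v`) off the critical neighborhoods. -/
structure MCM where
  /-- the lift of the circle map -/
  F : ℝ → ℝ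
  smooth : ContDiff ℝ 3 F
  mono : StrictMono F
  deg1 : ∀ x, F (x + 1) = F x + 1
  /-- number of critical points -/
  N : ℕ
  N_pos : 0 < N
  /-- the critical points (one representative in `[0,1)` for each) -/
  c : Fin N → ℝ
  c_mem : ∀ i, c i ∈ Set.Ico (0 : ℝ) 1
  c_inj : Function.Injective c
  isCrit : ∀ i, deriv F (c i) = 0
  critOnly : ∀ x, deriv F x = 0 → ∃ (i : Fin N) (k : ℤ), x = c i + (k : ℝ)
  /-- neighborhoods of the critical points -/
  W : Fin N → Set ℝ
  W_open : ∀ i, IsOpen (W i)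
  c_mem_W : ∀ i, c i ∈ W i
  /-- the criticalities (power-law exponents) -/
  s : Fin N → ℝ
  s_gt_one : ∀ i, 1 < s i
  al : Fin N → ℝ
  be : Fin N → ℝ
  al_pos : ∀ i, 0 < al i
  al_lt_be : ∀ i, al i < be i
  powerLaw : ∀ i, ∀ x ∈ W i, x ≠ c i →
    al i * |x - c i| ^ (s i - 1) < deriv F x ∧
      deriv F x < be i * |x - c i| ^ (s i - 1)
  negSchwarzian : ∀ i, ∀ x ∈ W i, x ≠ c i → schwarzianDeriv F x < 0
  /-- bound for the variation of `log DF` off the critical neighborhoods -/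
  v : ℝ
  v_pos : 0 < v
  logDF_var : eVariationOn (fun x => Real.log (deriv F x))
      (Set.Icc 0 1 \ ⋃ (i) (k : ℤ), (fun y => y + (k : ℝ)) '' W i) ≤ ENNReal.ofReal v

/-- The circle map with lift `F` has rotation number `ρ`. -/
def HasRotationNumber (F : ℝ → ℝ) (ρ : ℝ) : Prop :=
  Tendsto (fun n : ℕ => F^[n] 0 / n) atTop (nhds ρ)

/-- The Gauss map `x ↦ {1/x}`. -/
def gaussMap (x : ℝ) : ℝ := Int.fract x⁻¹

/-- Partial quotients `a_n` of the continued fraction expansion of `ρ ∈ (0,1)`. -/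
def cfDigit (ρ : ℝ) (n : ℕ) : ℕ := (⌊(gaussMap^[n] ρ)⁻¹⌋).toNat

/-- Return times: the denominators `q_n` of the convergents of `ρ`,
`q_0 = 1`, `q_1 = a_0`, `q_{n+1} = a_n q_n + q_{n-1}`. -/
def qDen (ρ : ℝ) : ℕ → ℕ
  | 0 => 1
  | 1 => cfDigit ρ 0
  | n + 2 => cfDigit ρ (n + 1) * qDen ρ (n + 1) + qDen ρ n

/-- Numerators `p_n` of the convergents of `ρ`:
`p_0 = 0`, `p_1 = 1`, `p_{n+1} = a_n p_n + p_{n-1}`. -/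
def pNum (ρ : ℝ) : ℕ → ℕ
  | 0 => 0
  | 1 => 1
  | n + 2 => cfDigit ρ (n + 1) * pNum ρ (n + 1) + pNum ρ n

/-- The lift of the atom `I_ℓ^j(x) = f^j(I_ℓ(x))`, where `I_ℓ(x)` is the interval with
endpoints `x` and `f^{q_ℓ}(x)`; the lift of `f^{q_ℓ}(x)` adjacent to `x` is
`F^[q_ℓ] x - p_ℓ`. -/
def atomSet (F : ℝ → ℝ) (ρ x : ℝ) (ℓ j : ℕ) : Set ℝ :=
  Set.uIcc (F^[j] x) (F^[j + qDen ρ ℓ] x - (pNum ρ ℓ : ℝ))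

/-- The length of the atom `I_ℓ^j(x)`. -/
def atomLen (F : ℝ → ℝ) (ρ x : ℝ) (ℓ j : ℕ) : ℝ :=
  |F^[j + qDen ρ ℓ] x - (pNum ρ ℓ : ℝ) - F^[j] x|

/-- The two endpoints (as lifts) of the atom `I_ℓ^j(x)`. -/
def atomEnds (F : ℝ → ℝ) (ρ x : ℝ) (ℓ j : ℕ) : Set ℝ :=
  {F^[j] x, F^[j + qDen ρ ℓ] x - (pNum ρ ℓ : ℝ)}

/-- `(ℓ, j)` indexes an atom of the `n`-th dynamical partition
`P_n(x) = {I_n^i(x) : i < q_{n+1}} ∪ {I_{n+1}^j(x) : j < q_n}`. -/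
def IsAtomIdx (ρ : ℝ) (n ℓ j : ℕ) : Prop :=
  (ℓ = n ∧ j < qDen ρ (n + 1)) ∨ (ℓ = n + 1 ∧ j < qDen ρ n)

/-- Two distinct atoms are adjacent when they share an endpoint on the circle,
i.e. when some endpoints of their lifts differ by an integer. -/
def AdjacentAtoms (F : ℝ → ℝ) (ρ x : ℝ) (ℓ₁ j₁ ℓ₂ j₂ : ℕ) : Prop :=
  (ℓ₁, j₁) ≠ (ℓ₂, j₂) ∧
    ∃ u ∈ atomEnds F ρ x ℓ₁ j₁, ∃ w ∈ atomEnds F ρ x ℓ₂ j₂, ∃ k : ℤ, w = u + (k : ℝ)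

/-- The real a-priori bounds hold for `f` with constant `C`: any two adjacent atoms of any
dynamical partition `P_n(c_k)` have lengths comparable with constant `C`. -/
def RealBounds (f : MCM) (ρ : ℝ) (C : ℝ) : Prop :=
  ∀ (k : Fin f.N) (n ℓ₁ j₁ ℓ₂ j₂ : ℕ),
    IsAtomIdx ρ n ℓ₁ j₁ → IsAtomIdx ρ n ℓ₂ j₂ →
    AdjacentAtoms f.F ρ (f.c k) ℓ₁ j₁ ℓ₂ j₂ →
    C⁻¹ * atomLen f.F ρ (f.c k) ℓ₂ j₂ ≤ atomLen f.F ρ (f.c k) ℓ₁ j₁ ∧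
      atomLen f.F ρ (f.c k) ℓ₁ j₁ ≤ C * atomLen f.F ρ (f.c k) ℓ₂ j₂

/-!
Let `g` and `h` be the lifts of `f^{q_n}` and `f^{q_{n+1}}` that move points least. They move
points in opposite directions, and `g ∘ h` still moves them in the direction of `g`. Hence every
atom of level `n`, at whatever base point, lies in an interval `[z, g z]`. If it meets an atom
`[a, b]` based at `c`, then applying the monotone map `g` to the order relations between endpoints
confines it to `[e, g b]`, for any `e` whose image `g e` does not pass `a`. The gaps `[b, g b]` and
`[e, a]`, with `e` chosen in the orbit of `c`, are covered by at most two further atoms based at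
`c`, each at most two adjacency steps away from `[a, b]`, so the a-priori bounds at `c` control
them. This bounds either atom by a multiple of the other.
-/

/-! ### Return times -/

/-- The translation number `q_n ρ - p_n` of the lift `F^{q_n} - p_n`. -/
def returnAngle (ρ : ℝ) (n : ℕ) : ℝ := qDen ρ n * ρ - pNum ρ n

theorem irrational_gaussMap {x : ℝ} (hx : Irrational x) : Irrational (gaussMap x) :=
  (irrational_inv_iff.2 hx).sub_intCast _

theorem irrational_gaussMap_iterate {ρ : ℝ} (hρ : Irrational ρ) (n : ℕ) :
    Irrational (gaussMap^[n] ρ) := by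
  induction n with
  | zero => exact hρ
  | succ n ih => simpa only [Function.iterate_succ_apply'] using irrational_gaussMap ih

theorem gaussMap_iterate_mem_Ioo {ρ : ℝ} (hρ : Irrational ρ) (h01 : ρ ∈ Ioo (0 : ℝ) 1) (n : ℕ) :
    gaussMap^[n] ρ ∈ Ioo (0 : ℝ) 1 := by
  cases n with
  | zero => exact h01
  | succ n =>
    have hne := (irrational_gaussMap_iterate hρ (n + 1)).ne_zero
    rw [Function.iterate_succ_apply'] at hne ⊢
    exact ⟨(Int.fract_nonneg _).lt_of_ne hne.symm, Int.fract_lt_one _⟩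

theorem cfDigit_eq_inv_sub {ρ : ℝ} {n : ℕ} (h : 0 ≤ gaussMap^[n] ρ) :
    (cfDigit ρ n : ℝ) = (gaussMap^[n] ρ)⁻¹ - gaussMap^[n + 1] ρ := by
  have hfloor : ((cfDigit ρ n : ℤ) : ℝ) = ⌊(gaussMap^[n] ρ)⁻¹⌋ := by
    rw [cfDigit, Int.toNat_of_nonneg (Int.floor_nonneg.2 (inv_nonneg.2 h))]
  rw [Function.iterate_succ_apply', gaussMap, Int.self_sub_fract, ← hfloor, Int.cast_natCast]

theorem one_le_cfDigit {ρ : ℝ} {n : ℕ} (h : gaussMap^[n] ρ ∈ Ioc (0 : ℝ) 1) :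
    1 ≤ cfDigit ρ n := by
  have hfloor : 1 ≤ ⌊(gaussMap^[n] ρ)⁻¹⌋ := Int.le_floor.2 (by simpa using one_le_inv₀ h.1 |>.2 h.2)
  rw [cfDigit]
  omega

theorem qDen_pos {ρ : ℝ} (hρ : Irrational ρ) (h01 : ρ ∈ Ioo (0 : ℝ) 1) : ∀ n, 0 < qDen ρ n
  | 0 => Nat.one_pos
  | 1 => one_le_cfDigit (Ioo_subset_Ioc_self (gaussMap_iterate_mem_Ioo hρ h01 0))
  | n + 2 => Nat.add_pos_right _ (qDen_pos hρ h01 n)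

theorem qDen_le_qDen_succ {ρ : ℝ} (hρ : Irrational ρ) (h01 : ρ ∈ Ioo (0 : ℝ) 1) :
    ∀ n, qDen ρ n ≤ qDen ρ (n + 1)
  | 0 => qDen_pos hρ h01 1
  | n + 1 =>
    have hdigit := one_le_cfDigit (Ioo_subset_Ioc_self (gaussMap_iterate_mem_Ioo hρ h01 (n + 1)))
    (Nat.le_mul_of_pos_left _ hdigit).trans (Nat.le_add_right _ _)

theorem returnAngle_add_two (ρ : ℝ) (n : ℕ) :
    returnAngle ρ (n + 2) =
      cfDigit ρ (n + 1) * returnAngle ρ (n + 1) + returnAngle ρ n := by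
  simp only [returnAngle, qDen, pNum]
  push_cast
  ring

theorem returnAngle_succ {ρ : ℝ} (hρ : Irrational ρ) (h01 : ρ ∈ Ioo (0 : ℝ) 1) (n : ℕ) :
    returnAngle ρ (n + 1) = -(gaussMap^[n + 1] ρ) * returnAngle ρ n := by
  have hdigit := fun m => cfDigit_eq_inv_sub (gaussMap_iterate_mem_Ioo hρ h01 m).1.le
  induction n with
  | zero =>
    have hρ0 : ρ ≠ 0 := h01.1.ne'
    simp only [returnAngle, qDen, pNum, hdigit, Function.iterate_zero, id]
    field_simp
    push_cast
    ring
  | succ n ih =>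
    have hne := (irrational_gaussMap_iterate hρ (n + 1)).ne_zero
    rw [returnAngle_add_two, hdigit, ih]
    field_simp
    ring

theorem returnAngle_ne_zero {ρ : ℝ} (hρ : Irrational ρ) (h01 : ρ ∈ Ioo (0 : ℝ) 1) (n : ℕ) :
    returnAngle ρ n ≠ 0 := by
  induction n with
  | zero => simpa [returnAngle, qDen, pNum] using hρ.ne_zero
  | succ n ih =>
    rw [returnAngle_succ hρ h01]
    exact mul_ne_zero (neg_ne_zero.2 (irrational_gaussMap_iterate hρ (n + 1)).ne_zero) ih

theorem returnAngle_alternating {ρ : ℝ} (hρ : Irrational ρ) (h01 : ρ ∈ Ioo (0 : ℝ) 1) (n : ℕ) :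
    (0 < returnAngle ρ n ∧ returnAngle ρ (n + 1) < 0 ∧
        0 < returnAngle ρ n + returnAngle ρ (n + 1)) ∨
      (returnAngle ρ n < 0 ∧ 0 < returnAngle ρ (n + 1) ∧
        returnAngle ρ n + returnAngle ρ (n + 1) < 0) := by
  obtain ⟨h0, h1⟩ := gaussMap_iterate_mem_Ioo hρ h01 (n + 1)
  rw [returnAngle_succ hρ h01]
  rcases (returnAngle_ne_zero hρ h01 n).lt_or_gt with hneg | hpos
  · exact Or.inr ⟨hneg, by nlinarith, by nlinarith⟩
  · exact Or.inl ⟨hpos, by nlinarith, by nlinarith⟩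

/-! ### Pairs of return maps -/

section ReturnPair

open OrderDual (toDual ofDual)

/-- `g` moves points forward, `h` moves them backward by a smaller amount. For even `n` this is
how the lifts of `f^{q_n}` and `f^{q_{n+1}}` act on the line. -/
structure IsForwardReturnPair {α : Type*} [Preorder α] (g h : α → α) : Prop where
  strictMono : StrictMono g
  lt_left : ∀ z, z < g z
  right_lt : ∀ z, h z < z
  lt_left_right : ∀ z, z < g (h z)

/-- `g` and `h` form a forward return pair after possibly reversing the order; this covers the
return maps of even and of odd level at once. -/
def IsReturnPair {α : Type*} [Preorder α] (g h : α → α) : Prop :=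
  IsForwardReturnPair g h ∨ IsForwardReturnPair (toDual ∘ g ∘ ofDual) (toDual ∘ h ∘ ofDual)

/-- The endpoints `a`, `b` of an interval `[z, g z]` or `[h z, z]`, listed in the direction in
which `g` moves points. Lifts of atoms of `P_n` have this form, with `g` and `h` the return maps
of levels `n` and `n + 1`. -/
def IsReturnArc {α : Type*} (g h : α → α) (a b : α) : Prop :=
  b = g a ∨ a = h b

namespace IsForwardReturnPair

variable {α : Type*} [LinearOrder α] {g h : α → α} {a b a' b' e : α}

theorem left_right_mem_uIcc (H : IsForwardReturnPair g h) (z : α) : g (h z) ∈ uIcc z (g z) :=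
  Icc_subset_uIcc ⟨(H.lt_left_right z).le, (H.strictMono (H.right_lt z)).le⟩

theorem le_of_isReturnArc (H : IsForwardReturnPair g h) (hab : IsReturnArc g h a b) :
    a ≤ b ∧ b ≤ g a := by
  rcases hab with rfl | rfl
  · exact ⟨(H.lt_left a).le, le_rfl⟩
  · exact ⟨(H.right_lt b).le, (H.lt_left_right b).le⟩

theorem uIcc_subset_uIcc (H : IsForwardReturnPair g h) (hab : IsReturnArc g h a b)
    (hab' : IsReturnArc g h a' b') (he : g e = a ∨ g e = h a)
    (hne : (uIcc a b ∩ uIcc a' b').Nonempty) : uIcc a' b' ⊆ uIcc e (g b) := by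
  have hle := (H.le_of_isReturnArc hab).1
  obtain ⟨hle', hbg'⟩ := H.le_of_isReturnArc hab'
  rw [uIcc_of_le hle, uIcc_of_le hle'] at hne
  obtain ⟨z, ⟨haz, hzb⟩, haz', hzb'⟩ := hne
  have hea : g e ≤ a := he.elim le_of_eq fun hh => hh.trans_le (H.right_lt a).le
  have he' : e ≤ a' := H.strictMono.le_iff_le.1 (by order)
  have hb' : b' ≤ g b := hbg'.trans (H.strictMono.monotone (haz'.trans hzb))
  rw [uIcc_of_le hle']
  exact (Icc_subset_Icc he' hb').trans Icc_subset_uIcc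

end IsForwardReturnPair

namespace IsReturnPair

theorem left_right_mem_uIcc {α : Type*} [LinearOrder α] {g h : α → α} (H : IsReturnPair g h)
    (z : α) : g (h z) ∈ uIcc z (g z) := by
  rcases H with H | H
  · exact H.left_right_mem_uIcc z
  · simpa using H.left_right_mem_uIcc (toDual z)

theorem uIcc_subset_uIcc {α : Type*} [LinearOrder α] {g h : α → α} {a b a' b' e : α}
    (H : IsReturnPair g h) (hab : IsReturnArc g h a b) (hab' : IsReturnArc g h a' b')
    (he : g e = a ∨ g e = h a) (hne : (uIcc a b ∩ uIcc a' b').Nonempty) :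
    uIcc a' b' ⊆ uIcc e (g b) := by
  rcases H with H | H
  · exact H.uIcc_subset_uIcc hab hab' he hne
  · have hsub := H.uIcc_subset_uIcc (a := toDual a) (b := toDual b)
      (a' := toDual a') (b' := toDual b') (e := toDual e)
      hab hab' he (by rw [uIcc_toDual, uIcc_toDual]; exact hne)
    simp only [Function.comp_apply, OrderDual.ofDual_toDual, uIcc_toDual] at hsub
    exact hsub

theorem dist_left_right_le {g h : ℝ → ℝ} (H : IsReturnPair g h) (z : ℝ) :
    dist (g (h z)) (h z) ≤ dist (g z) z + dist (h z) z := by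
  have hmem := Real.dist_left_le_of_mem_uIcc (H.left_right_mem_uIcc z)
  linarith [dist_triangle_right (g (h z)) (h z) z, dist_comm (g (h z)) z, dist_comm (g z) z]

end IsReturnPair

end ReturnPair

/-- Both sides of the arc from `a` to `b` are controlled at scale `M * |b - a|`: the arc from `b`
to `g b` on one side, and on the other an arc from some `e` to `a` whose `g`-image reaches no
further than `a`. -/
def HasCollar (g h : ℝ → ℝ) (M a b : ℝ) : Prop :=
  dist (g b) b ≤ M * dist b a ∧ ∃ e, (g e = a ∨ g e = h a) ∧ dist a e ≤ M * dist b a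

theorem HasCollar.mono {g h : ℝ → ℝ} {M M' a b : ℝ} (hM : HasCollar g h M a b) (hMM' : M ≤ M') :
    HasCollar g h M' a b := by
  obtain ⟨hgb, e, he, hae⟩ := hM
  exact ⟨hgb.trans (by gcongr), e, he, hae.trans (by gcongr)⟩

theorem HasCollar.dist_le {g h : ℝ → ℝ} {M a b a' b' : ℝ} (hM : HasCollar g h M a b)
    (H : IsReturnPair g h) (hab : IsReturnArc g h a b) (hab' : IsReturnArc g h a' b')
    (hne : (uIcc a b ∩ uIcc a' b').Nonempty) :
    dist b' a' ≤ (1 + 2 * M) * dist b a := by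
  obtain ⟨hgb, e, he, hae⟩ := hM
  have hsub := H.uIcc_subset_uIcc hab hab' he hne
  calc dist b' a' ≤ dist (g b) e := by
        rw [dist_comm (g b)]
        exact Real.dist_le_of_mem_uIcc (hsub right_mem_uIcc) (hsub left_mem_uIcc)
    _ ≤ dist (g b) b + dist b a + dist a e := dist_triangle4 _ _ _ _
    _ ≤ (1 + 2 * M) * dist b a := by linarith

/-! ### The return maps of a lift -/

/-- The lift `F^{q_n} - p_n` of `f^{q_n}` that moves points least. -/
def returnMap (F : ℝ → ℝ) (ρ : ℝ) (n : ℕ) (x : ℝ) : ℝ := F^[qDen ρ n] x - pNum ρ n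

theorem returnMap_iterate (F : ℝ → ℝ) (ρ x : ℝ) (n j : ℕ) :
    returnMap F ρ n (F^[j] x) = F^[j + qDen ρ n] x - pNum ρ n := by
  rw [returnMap, add_comm, Function.iterate_add_apply]

theorem atomSet_eq_uIcc_returnMap (F : ℝ → ℝ) (ρ x : ℝ) (ℓ j : ℕ) :
    atomSet F ρ x ℓ j = uIcc (F^[j] x) (returnMap F ρ ℓ (F^[j] x)) := by
  rw [atomSet, returnMap_iterate]

theorem atomLen_eq_dist_returnMap (F : ℝ → ℝ) (ρ x : ℝ) (ℓ j : ℕ) :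
    atomLen F ρ x ℓ j = dist (returnMap F ρ ℓ (F^[j] x)) (F^[j] x) := by
  rw [atomLen, returnMap_iterate, Real.dist_eq]

theorem IsAtomIdx.exists_isReturnArc {ρ : ℝ} {n ℓ j : ℕ} (hidx : IsAtomIdx ρ n ℓ j) (F : ℝ → ℝ)
    (x : ℝ) :
    ∃ a b, atomSet F ρ x ℓ j = uIcc a b ∧ atomLen F ρ x ℓ j = dist b a ∧
      IsReturnArc (returnMap F ρ n) (returnMap F ρ (n + 1)) a b := by
  rw [atomSet_eq_uIcc_returnMap, atomLen_eq_dist_returnMap]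
  rcases hidx with ⟨rfl, -⟩ | ⟨rfl, -⟩
  · exact ⟨_, _, rfl, rfl, Or.inl rfl⟩
  · exact ⟨_, _, uIcc_comm _ _, dist_comm _ _, Or.inr rfl⟩

theorem HasRotationNumber.translationNumber_eq {f : CircleDeg1Lift} {ρ : ℝ}
    (h : HasRotationNumber f ρ) : f.translationNumber = ρ :=
  f.translationNumber_eq_of_tendsto₀ h

section Lift

variable {f : CircleDeg1Lift} {ρ : ℝ}

theorem iterate_add_int (f : CircleDeg1Lift) (m : ℕ) (x : ℝ) (k : ℤ) :
    f^[m] (x + k) = f^[m] x + k := by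
  rw [← f.coe_pow, CircleDeg1Lift.map_add_int]

theorem returnMap_add_int (f : CircleDeg1Lift) (ρ : ℝ) (n : ℕ) (x : ℝ) (k : ℤ) :
    returnMap f ρ n (x + k) = returnMap f ρ n x + k := by
  rw [returnMap, returnMap, iterate_add_int]
  ring

theorem dist_returnMap_add_int (f : CircleDeg1Lift) (ρ : ℝ) (n : ℕ) (x : ℝ) (k : ℤ) :
    dist (returnMap f ρ n (x + k)) (x + k) = dist (returnMap f ρ n x) x := by
  rw [returnMap_add_int, dist_add_right]

theorem atomSet_add_int (f : CircleDeg1Lift) (ρ x : ℝ) (k : ℤ) (ℓ j : ℕ) :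
    atomSet f ρ (x + k) ℓ j = (· + (k : ℝ)) '' atomSet f ρ x ℓ j := by
  simp only [atomSet_eq_uIcc_returnMap, iterate_add_int, returnMap_add_int, image_add_const_uIcc]

theorem atomLen_add_int (f : CircleDeg1Lift) (ρ x : ℝ) (k : ℤ) (ℓ j : ℕ) :
    atomLen f ρ (x + k) ℓ j = atomLen f ρ x ℓ j := by
  simp only [atomLen_eq_dist_returnMap, iterate_add_int, dist_returnMap_add_int]

theorem returnMap_returnMap (f : CircleDeg1Lift) (ρ : ℝ) (m n : ℕ) (x : ℝ) :
    returnMap f ρ m (returnMap f ρ n x) =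
      f^[qDen ρ m + qDen ρ n] x - ((pNum ρ m + pNum ρ n : ℤ) : ℝ) := by
  have hshift : returnMap f ρ n x = f^[qDen ρ n] x + ((-pNum ρ n : ℤ) : ℝ) := by
    rw [returnMap, Int.cast_neg, Int.cast_natCast, sub_eq_add_neg]
  rw [hshift, returnMap_add_int, returnMap, Function.iterate_add_apply]
  push_cast
  ring

theorem lt_iterate_sub_int {m : ℕ} {r : ℤ} (h : 0 < m * f.translationNumber - r) (x : ℝ) :
    x < f^[m] x - r := by
  rw [sub_pos, ← f.translationNumber_pow] at h
  simpa only [f.coe_pow, lt_sub_iff_add_lt] using (f ^ m).lt_map_of_int_lt_translationNumber h x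

theorem iterate_sub_int_lt {m : ℕ} {r : ℤ} (h : m * f.translationNumber - r < 0) (x : ℝ) :
    f^[m] x - r < x := by
  rw [sub_neg, ← f.translationNumber_pow] at h
  simpa only [f.coe_pow, sub_lt_iff_lt_add] using (f ^ m).map_lt_of_translationNumber_lt_int h x

theorem lt_returnMap (hτ : f.translationNumber = ρ) {n : ℕ} (h : 0 < returnAngle ρ n) (x : ℝ) :
    x < returnMap f ρ n x :=
  lt_iterate_sub_int (r := pNum ρ n) (by rwa [hτ, Int.cast_natCast]) x

theorem returnMap_lt (hτ : f.translationNumber = ρ) {n : ℕ} (h : returnAngle ρ n < 0) (x : ℝ) :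
    returnMap f ρ n x < x :=
  iterate_sub_int_lt (r := pNum ρ n) (by rwa [hτ, Int.cast_natCast]) x

theorem lt_returnMap_returnMap (hτ : f.translationNumber = ρ) {m n : ℕ}
    (h : 0 < returnAngle ρ m + returnAngle ρ n) (x : ℝ) :
    x < returnMap f ρ m (returnMap f ρ n x) := by
  rw [returnMap_returnMap]
  refine lt_iterate_sub_int ?_ x
  rw [returnAngle, returnAngle] at h
  rw [hτ]
  push_cast
  linarith

theorem returnMap_returnMap_lt (hτ : f.translationNumber = ρ) {m n : ℕ}
    (h : returnAngle ρ m + returnAngle ρ n < 0) (x : ℝ) :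
    returnMap f ρ m (returnMap f ρ n x) < x := by
  rw [returnMap_returnMap]
  refine iterate_sub_int_lt ?_ x
  rw [returnAngle, returnAngle] at h
  rw [hτ]
  push_cast
  linarith

theorem strictMono_returnMap {F : ℝ → ℝ} (hF : StrictMono F) (ρ : ℝ) (n : ℕ) :
    StrictMono (returnMap F ρ n) :=
  fun _ _ hxy => sub_lt_sub_right (hF.iterate _ hxy) _

theorem isReturnPair_returnMap (hf : StrictMono f) (hρ : Irrational ρ) (h01 : ρ ∈ Ioo (0 : ℝ) 1)
    (hτ : f.translationNumber = ρ) (n : ℕ) :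
    IsReturnPair (returnMap f ρ n) (returnMap f ρ (n + 1)) := by
  have hmono := strictMono_returnMap hf ρ n
  rcases returnAngle_alternating hρ h01 n with ⟨hn, hn', hsum⟩ | ⟨hn, hn', hsum⟩
  · exact Or.inl ⟨hmono, lt_returnMap hτ hn, returnMap_lt hτ hn', lt_returnMap_returnMap hτ hsum⟩
  · exact Or.inr
      ⟨hmono.dual, returnMap_lt hτ hn, lt_returnMap hτ hn', returnMap_returnMap_lt hτ hsum⟩

end Lift

/-! ### Adjacent atoms -/

namespace AdjacentAtoms

variable {F : ℝ → ℝ} {ρ x : ℝ} {ℓ₁ j₁ ℓ₂ j₂ : ℕ}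

theorem symm (h : AdjacentAtoms F ρ x ℓ₁ j₁ ℓ₂ j₂) : AdjacentAtoms F ρ x ℓ₂ j₂ ℓ₁ j₁ := by
  obtain ⟨hne, u, hu, w, hw, k, rfl⟩ := h
  exact ⟨hne.symm, _, hw, u, hu, -k, by push_cast; ring⟩

theorem of_ne_level (h : ℓ₁ ≠ ℓ₂) (j : ℕ) : AdjacentAtoms F ρ x ℓ₁ j ℓ₂ j :=
  ⟨by simp [h], _, Or.inl rfl, _, Or.inl rfl, 0, by simp⟩

theorem of_add_qDen_eq (h : ℓ₁ ≠ ℓ₂) (hj : j₁ + qDen ρ ℓ₁ = j₂ + qDen ρ ℓ₂) :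
    AdjacentAtoms F ρ x ℓ₁ j₁ ℓ₂ j₂ :=
  ⟨by simp [h], _, Or.inr rfl, _, Or.inr rfl, pNum ρ ℓ₁ - pNum ρ ℓ₂, by
    rw [hj]; push_cast; ring⟩

theorem add_qDen {ℓ : ℕ} (h : 0 < qDen ρ ℓ) (j : ℕ) :
    AdjacentAtoms F ρ x ℓ (j + qDen ρ ℓ) ℓ j :=
  ⟨by simp [h.ne'], _, Or.inl rfl, _, Or.inr rfl, -pNum ρ ℓ, by push_cast; ring⟩

end AdjacentAtoms

/-- Adjacent atoms of `P_n(x)` have lengths comparable with constant `C`. Adjacency being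
symmetric, the one-sided inequality suffices. -/
def AdjacentAtomBound (F : ℝ → ℝ) (ρ x C : ℝ) (n : ℕ) : Prop :=
  ∀ ⦃ℓ₁ j₁ ℓ₂ j₂ : ℕ⦄, IsAtomIdx ρ n ℓ₁ j₁ → IsAtomIdx ρ n ℓ₂ j₂ →
    AdjacentAtoms F ρ x ℓ₁ j₁ ℓ₂ j₂ → atomLen F ρ x ℓ₁ j₁ ≤ C * atomLen F ρ x ℓ₂ j₂

theorem RealBounds.adjacentAtomBound {f : MCM} {ρ C : ℝ} (h : RealBounds f ρ C) (i : Fin f.N)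
    (n : ℕ) : AdjacentAtomBound f.F ρ (f.c i) C n :=
  fun _ _ _ _ h₁ h₂ hadj => (h i n _ _ _ _ h₁ h₂ hadj).2

namespace AdjacentAtomBound

variable {f : CircleDeg1Lift} {ρ x C : ℝ} {n : ℕ}

/-- `e` is the initial endpoint of the long atom preceding the short atom with index `k`. -/
theorem exists_returnMap_eq (hA : AdjacentAtomBound f ρ x C n)
    (hq : qDen ρ n ≤ qDen ρ (n + 1)) {k : ℕ} (hk : k < qDen ρ n) :
    ∃ e, returnMap f ρ n e = returnMap f ρ (n + 1) (f^[k] x) ∧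
      dist (returnMap f ρ n e) e ≤ C * atomLen f ρ x (n + 1) k := by
  obtain ⟨j, hj⟩ : ∃ j, j + qDen ρ n = k + qDen ρ (n + 1) :=
    ⟨k + qDen ρ (n + 1) - qDen ρ n, by omega⟩
  refine ⟨f^[j] x + ((pNum ρ n - pNum ρ (n + 1) : ℤ) : ℝ), ?_, ?_⟩
  · rw [returnMap_add_int, returnMap_iterate, returnMap_iterate, hj]
    push_cast
    ring
  · rw [dist_returnMap_add_int, ← atomLen_eq_dist_returnMap]
    exact hA (Or.inl ⟨rfl, by omega⟩) (Or.inr ⟨rfl, hk⟩) (.of_add_qDen_eq (by simp) hj)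

theorem hasCollar_short (hA : AdjacentAtomBound f ρ x C n)
    (hq : qDen ρ n ≤ qDen ρ (n + 1)) {k : ℕ} (hk : k < qDen ρ n) :
    HasCollar (returnMap f ρ n) (returnMap f ρ (n + 1)) C
      (returnMap f ρ (n + 1) (f^[k] x)) (f^[k] x) := by
  obtain ⟨e, he, hdist⟩ := hA.exists_returnMap_eq hq hk
  rw [HasCollar, dist_comm (f^[k] x), ← atomLen_eq_dist_returnMap, ← atomLen_eq_dist_returnMap]
  exact ⟨hA (Or.inl ⟨rfl, by omega⟩) (Or.inr ⟨rfl, hk⟩) (.of_ne_level (by simp) k),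
    e, Or.inl he, he ▸ hdist⟩

theorem dist_returnMap_returnMap_le (hA : AdjacentAtomBound f ρ x C n) (hC : 0 ≤ C)
    (H : IsReturnPair (returnMap f ρ n) (returnMap f ρ (n + 1))) (hq₀ : 0 < qDen ρ n)
    (hq : qDen ρ n ≤ qDen ρ (n + 1)) {i : ℕ} (hi : i < qDen ρ (n + 1)) :
    dist (returnMap f ρ n (returnMap f ρ n (f^[i] x))) (returnMap f ρ n (f^[i] x)) ≤
      (C + C ^ 2) * atomLen f ρ x n i := by
  have hlen : 0 ≤ atomLen f ρ x n i := abs_nonneg _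
  have hlong : IsAtomIdx ρ n n i := Or.inl ⟨rfl, hi⟩
  rcases lt_or_ge (i + qDen ρ n) (qDen ρ (n + 1)) with hlt | hge
  · have hb : returnMap f ρ n (f^[i] x) = f^[i + qDen ρ n] x + ((-pNum ρ n : ℤ) : ℝ) := by
      rw [returnMap_iterate]
      push_cast
      ring
    rw [hb, dist_returnMap_add_int, ← atomLen_eq_dist_returnMap]
    calc atomLen f ρ x n (i + qDen ρ n) ≤ C * atomLen f ρ x n i :=
          hA (Or.inl ⟨rfl, hlt⟩) hlong (.add_qDen hq₀ i)
      _ ≤ (C + C ^ 2) * atomLen f ρ x n i := by gcongr; nlinarith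
  · obtain ⟨k, hk⟩ := Nat.exists_eq_add_of_le' hge
    have hkq : k < qDen ρ n := by omega
    have hb : returnMap f ρ n (f^[i] x) =
        returnMap f ρ (n + 1) (f^[k] x) + ((pNum ρ (n + 1) - pNum ρ n : ℤ) : ℝ) := by
      rw [returnMap_iterate, returnMap_iterate, hk]
      push_cast
      ring
    have hshort : IsAtomIdx ρ n (n + 1) k := Or.inr ⟨rfl, hkq⟩
    have hshort_le : atomLen f ρ x (n + 1) k ≤ C * atomLen f ρ x n i :=
      hA hshort hlong (.of_add_qDen_eq (by simp) hk.symm)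
    have hlong_le : atomLen f ρ x n k ≤ C * atomLen f ρ x (n + 1) k :=
      hA (Or.inl ⟨rfl, by omega⟩) hshort (.of_ne_level (by simp) k)
    rw [hb, dist_returnMap_add_int]
    calc dist (returnMap f ρ n (returnMap f ρ (n + 1) (f^[k] x))) (returnMap f ρ (n + 1) (f^[k] x))
        ≤ atomLen f ρ x n k + atomLen f ρ x (n + 1) k := by
          simpa only [atomLen_eq_dist_returnMap] using H.dist_left_right_le (f^[k] x)
      _ ≤ C * (C * atomLen f ρ x n i) + C * atomLen f ρ x n i := by
          gcongr; exact hlong_le.trans (by gcongr)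
      _ = (C + C ^ 2) * atomLen f ρ x n i := by ring

theorem exists_returnMap_eq_and_dist_le (hA : AdjacentAtomBound f ρ x C n) (hC : 0 ≤ C)
    (hq₀ : 0 < qDen ρ n) (hq : qDen ρ n ≤ qDen ρ (n + 1)) {i : ℕ} (hi : i < qDen ρ (n + 1)) :
    ∃ e, (returnMap f ρ n e = f^[i] x ∨ returnMap f ρ n e = returnMap f ρ (n + 1) (f^[i] x)) ∧
      dist (f^[i] x) e ≤ (C + C ^ 2) * atomLen f ρ x n i := by
  have hlen : 0 ≤ atomLen f ρ x n i := abs_nonneg _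
  have hlong : IsAtomIdx ρ n n i := Or.inl ⟨rfl, hi⟩
  rcases le_or_gt (qDen ρ n) i with hge | hlt
  · obtain ⟨j, rfl⟩ := Nat.exists_eq_add_of_le' hge
    have he : returnMap f ρ n (f^[j] x + (pNum ρ n : ℤ)) = f^[j + qDen ρ n] x := by
      rw [returnMap_add_int, returnMap_iterate, Int.cast_natCast, sub_add_cancel]
    refine ⟨_, Or.inl he, ?_⟩
    rw [← he, dist_returnMap_add_int, ← atomLen_eq_dist_returnMap]
    calc atomLen f ρ x n j ≤ C * atomLen f ρ x n (j + qDen ρ n) :=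
          hA (Or.inl ⟨rfl, by omega⟩) hlong (AdjacentAtoms.add_qDen hq₀ j).symm
      _ ≤ (C + C ^ 2) * atomLen f ρ x n (j + qDen ρ n) := by gcongr; nlinarith
  · obtain ⟨e, he, hdist⟩ := hA.exists_returnMap_eq hq hlt
    have hshort_le : atomLen f ρ x (n + 1) i ≤ C * atomLen f ρ x n i :=
      hA (Or.inr ⟨rfl, hlt⟩) hlong (.of_ne_level (by simp) i)
    refine ⟨e, Or.inr he, ?_⟩
    calc dist (f^[i] x) e
        ≤ atomLen f ρ x (n + 1) i + dist (returnMap f ρ n e) e := by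
          rw [atomLen_eq_dist_returnMap, ← he]
          exact dist_triangle_left _ _ _
      _ ≤ C * atomLen f ρ x n i + C * (C * atomLen f ρ x n i) := by
          gcongr; exact hdist.trans (by gcongr)
      _ = (C + C ^ 2) * atomLen f ρ x n i := by ring

theorem exists_isReturnArc_hasCollar (hA : AdjacentAtomBound f ρ x C n) (hC : 0 ≤ C)
    (H : IsReturnPair (returnMap f ρ n) (returnMap f ρ (n + 1))) (hq₀ : 0 < qDen ρ n)
    (hq : qDen ρ n ≤ qDen ρ (n + 1)) {ℓ j : ℕ} (hidx : IsAtomIdx ρ n ℓ j) :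
    ∃ a b, atomSet f ρ x ℓ j = uIcc a b ∧ atomLen f ρ x ℓ j = dist b a ∧
      IsReturnArc (returnMap f ρ n) (returnMap f ρ (n + 1)) a b ∧
      HasCollar (returnMap f ρ n) (returnMap f ρ (n + 1)) (C + C ^ 2) a b := by
  rw [atomSet_eq_uIcc_returnMap, atomLen_eq_dist_returnMap]
  rcases hidx with ⟨rfl, hj⟩ | ⟨rfl, hj⟩
  · refine ⟨f^[j] x, _, rfl, rfl, Or.inl rfl, ?_⟩
    rw [HasCollar, ← atomLen_eq_dist_returnMap]
    exact ⟨hA.dist_returnMap_returnMap_le hC H hq₀ hq hj,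
      hA.exists_returnMap_eq_and_dist_le hC hq₀ hq hj⟩
  · exact ⟨_, f^[j] x, uIcc_comm _ _, dist_comm _ _, Or.inr rfl,
      (hA.hasCollar_short hq hj).mono (by nlinarith)⟩

theorem atomLen_le (hA : AdjacentAtomBound f ρ x C n) (hC : 0 ≤ C) (hf : StrictMono f)
    (hρ : Irrational ρ) (h01 : ρ ∈ Ioo (0 : ℝ) 1) (hrot : HasRotationNumber f ρ)
    {x' : ℝ} {ℓ j ℓ' j' : ℕ} (hidx : IsAtomIdx ρ n ℓ j) (hidx' : IsAtomIdx ρ n ℓ' j')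
    (hmeet : ∃ u ∈ atomSet f ρ x ℓ j, ∃ u' ∈ atomSet f ρ x' ℓ' j', ∃ k : ℤ, u' = u + (k : ℝ)) :
    atomLen f ρ x' ℓ' j' ≤ (1 + 2 * (C + C ^ 2)) * atomLen f ρ x ℓ j := by
  have H := isReturnPair_returnMap hf hρ h01 hrot.translationNumber_eq n
  obtain ⟨a, b, hset, hlen, harc, hcollar⟩ :=
    hA.exists_isReturnArc_hasCollar hC H (qDen_pos hρ h01 n) (qDen_le_qDen_succ hρ h01 n) hidx
  obtain ⟨u, hu, _, hu', k, rfl⟩ := hmeet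
  obtain ⟨a', b', hset', hlen', harc'⟩ := hidx'.exists_isReturnArc f (x' + (-k : ℤ))
  have hu'' : u ∈ atomSet f ρ (x' + (-k : ℤ)) ℓ' j' := by
    rw [atomSet_add_int]
    exact ⟨_, hu', by push_cast; ring⟩
  rw [← atomLen_add_int f ρ x' (-k), hlen, hlen']
  exact hcollar.dist_le H harc harc' ⟨u, hset ▸ hu, hset' ▸ hu''⟩

end AdjacentAtomBound

theorem intersecting_atoms_comparable_general {f : CircleDeg1Lift} (hf : StrictMono f)
    {ρ C : ℝ} (hC : 0 < C) (hρ : Irrational ρ) (h01 : ρ ∈ Ioo (0 : ℝ) 1)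
    (hrot : HasRotationNumber f ρ) {x x' : ℝ} {n : ℕ} (hA : AdjacentAtomBound f ρ x C n)
    (hA' : AdjacentAtomBound f ρ x' C n) {ℓ j ℓ' j' : ℕ} (hidx : IsAtomIdx ρ n ℓ j)
    (hidx' : IsAtomIdx ρ n ℓ' j')
    (hmeet : ∃ u ∈ atomSet f ρ x ℓ j, ∃ u' ∈ atomSet f ρ x' ℓ' j', ∃ k : ℤ, u' = u + (k : ℝ)) :
    (1 + 2 * (C + C ^ 2))⁻¹ * atomLen f ρ x' ℓ' j' ≤ atomLen f ρ x ℓ j ∧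
      atomLen f ρ x ℓ j ≤ (1 + 2 * (C + C ^ 2)) * atomLen f ρ x' ℓ' j' := by
  have hmeet' : ∃ u' ∈ atomSet f ρ x' ℓ' j', ∃ u ∈ atomSet f ρ x ℓ j, ∃ k : ℤ,
      u = u' + (k : ℝ) := by
    obtain ⟨u, hu, _, hu', k, rfl⟩ := hmeet
    exact ⟨_, hu', u, hu, -k, by push_cast; ring⟩
  exact ⟨(inv_mul_le_iff₀ (by positivity)).2
      (hA.atomLen_le hC.le hf hρ h01 hrot hidx hidx' hmeet),
    hA'.atomLen_le hC.le hf hρ h01 hrot hidx' hidx hmeet'⟩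

/-- The lift of a multicritical circle map as a bundled monotone degree one lift. -/
def MCM.toCircleDeg1Lift (f : MCM) : CircleDeg1Lift := ⟨⟨f.F, f.mono.monotone⟩, f.deg1⟩

/-- **intersecting atoms are comparable.** For every `C > 1` there is
`K > 1`, depending only on `C`, such that: if the real bounds hold for `f` with constant
`C`, and `Δ ∈ P_n(c)`, `Δ′ ∈ P_n(c′)` are atoms of the level-`n` dynamical partitions of
two critical points which intersect on the circle, then `|Δ| ≍ |Δ′|` with constant `K`. -/
theorem intersecting_atoms_comparable :
    ∀ C : ℝ, 1 < C → ∃ K : ℝ, 1 < K ∧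
      ∀ (f : MCM) (ρ : ℝ), Irrational ρ → ρ ∈ Set.Ioo (0 : ℝ) 1 →
        HasRotationNumber f.F ρ → RealBounds f ρ C →
        ∀ (i i' : Fin f.N) (n ℓ j ℓ' j' : ℕ),
          IsAtomIdx ρ n ℓ j → IsAtomIdx ρ n ℓ' j' →
          (∃ u ∈ atomSet f.F ρ (f.c i) ℓ j, ∃ u' ∈ atomSet f.F ρ (f.c i') ℓ' j',
            ∃ k : ℤ, u' = u + (k : ℝ)) →
          K⁻¹ * atomLen f.F ρ (f.c i') ℓ' j' ≤ atomLen f.F ρ (f.c i) ℓ j ∧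
            atomLen f.F ρ (f.c i) ℓ j ≤ K * atomLen f.F ρ (f.c i') ℓ' j' := by
  intro C hC
  refine ⟨1 + 2 * (C + C ^ 2), by nlinarith, ?_⟩
  intro f ρ hρ h01 hrot hRB i i' n ℓ j ℓ' j' hidx hidx' hmeet
  exact intersecting_atoms_comparable_general (f := f.toCircleDeg1Lift) f.mono (by linarith) hρ h01
    hrot (hRB.adjacentAtomBound i n) (hRB.adjacentAtomBound i' n) hidx hidx' hmeet
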